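/- For all real δ, ε > 0 with ε < 1/20, there exists a real τ > 0 with the following property. Let G be a τ-critical graph, and let X ⊆ V(G) with |X| ≥ δ|G|, such that the induced subgraph G[X] has maximum degree at most εδ|G|. Then there is an integer t ≥ 1/(400ε) and a (t, δ|G|/(400ε t²))-comb ((a_i, B_i) : 1 ≤ i ≤ t) of G[X] such that {a_1, …, a_t} is a stable set, and there is a vertex v ∈ X adjacent to each of a_1, …, a_t and with no neighbours in B_1 ∪ ⋯ ∪ B_t. -/

import Mathlib

open SimpleGraph

/-- The independence (stable set) number of a graph: the clique number of the complement. -/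
noncomputable def alphaNum {V : Type*} (G : SimpleGraph V) : ℕ := Gᶜ.cliqueNum

/-- The clique number of a graph. -/
noncomputable def omegaNum {V : Type*} (G : SimpleGraph V) : ℕ := G.cliqueNum

/-- κ(G) = α(G)·ω(G). -/
noncomputable def kappaNum {V : Type*} (G : SimpleGraph V) : ℕ := alphaNum G * omegaNum G

/-- A graph `G` is `τ`-critical if `κ(G) < |G|^τ` but every proper induced subgraph `G'`
satisfies `κ(G') ≥ |G'|^τ`. -/
def TauCritical {V : Type*} [Fintype V] (τ : ℝ) (G : SimpleGraph V) : Prop :=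
  (kappaNum G : ℝ) < (Fintype.card V : ℝ) ^ τ ∧
  ∀ X : Finset V, X ≠ Finset.univ →
    (X.card : ℝ) ^ τ ≤ (kappaNum (G.induce (X : Set V)) : ℝ)

/-- A `(t, k)`-comb in `G`: distinct vertices `a i`, pairwise disjoint sets `B i` avoiding
all the `a j`'s, with `a i` adjacent to all of `B i`, `a i` with no neighbour in `B j` for
`j ≠ i`, and each `|B i| ≥ k`. -/
def IsComb {V : Type*} (G : SimpleGraph V) {t : ℕ} (k : ℝ)
    (a : Fin t → V) (B : Fin t → Finset V) : Prop :=
  Function.Injective a ∧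
  Pairwise (Function.onFun Disjoint B) ∧
  (∀ i j, a i ∉ B j) ∧
  (∀ i, ∀ v ∈ B i, G.Adj (a i) v) ∧
  (∀ i j, i ≠ j → ∀ v ∈ B j, ¬ G.Adj (a i) v) ∧
  (∀ i, k ≤ ((B i).card : ℝ))

/-! Call a vertex `v` and a stable set `I` of its neighbours *rich* if every `i ∈ I` has many
private neighbours (seen from no other member of `I`) outside the neighbourhood of `v`; enumerating
a rich pair gives the comb. Suppose that `G[X]` contains no rich pair. A greedy covering argument
shows that a stable set `S` of neighbours of `v`, whose members have degree at most `Δ`, sees only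
`O(√(ΓΔ))` non-neighbours of `v`, where `Γ = δ|G|/(400ε)`.

First take `Δ = εδ|G|`. If `v` had linearly many neighbours, then criticality would give a stable
set `S` of neighbours with `|S| ω ≥ |G|^τ / 2`. As `S` sees less than 95% of `X`, criticality
would also give such a stable set among the vertices unseen by `S`, and the union of both would
contradict `κ(G) < |G|^τ`. So `G[X]` is very sparse.

Now build a stable set greedily: take a vertex of maximum degree `d` in what is left of `X`, keep
a stable set `S` with `|S| ω ≥ d^τ` among its neighbours, and delete the `O(d + √(Γd))` vertices
which are neighbours of `v` or are seen by `S`. As `√d` grows faster than `d^τ` and `d` is a tiny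
fraction of `|G|`, each deletion is cheap compared to the gain, and the resulting stable set `T`
has `|T| ω ≥ |G|^τ`, a contradiction. -/

open Finset

/-! ### Private neighbours and greedy covers -/

section GreedyCover

variable {V : Type*} [DecidableEq V] (G : SimpleGraph V) [DecidableRel G.Adj]

/-- The private neighbours of `i` with respect to `I`: the vertices of `B` that are adjacent to `i`
and to no other member of `I`. It is not required that `i ∈ I`. -/
def privateNeighbors (I B : Finset V) (i : V) : Finset V :=
  {b ∈ B | G.Adj i b ∧ ∀ j ∈ I, G.Adj j b → j = i}

variable {G} in
lemma mem_privateNeighbors {I B : Finset V} {i b : V} :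
    b ∈ privateNeighbors G I B i ↔ b ∈ B ∧ G.Adj i b ∧ ∀ j ∈ I, G.Adj j b → j = i :=
  mem_filter

lemma privateNeighbors_subset (I B : Finset V) (i : V) : privateNeighbors G I B i ⊆ B :=
  filter_subset _ B

lemma privateNeighbors_mono {I B C : Finset V} (h : B ⊆ C) (i : V) :
    privateNeighbors G I B i ⊆ privateNeighbors G I C i :=
  filter_subset_filter _ h

lemma privateNeighbors_filter_not_adj_self (I B : Finset V) (a : V) :
    privateNeighbors G I {b ∈ B | ¬G.Adj a b} a = ∅ :=
  filter_eq_empty_iff.2 fun _ hb h => (mem_filter.1 hb).2 h.1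

lemma privateNeighbors_filter_not_adj_subset (I B : Finset V) (a i : V) :
    privateNeighbors G I {b ∈ B | ¬G.Adj a b} i ⊆ privateNeighbors G (insert a I) B i := by
  intro b hb
  simp only [mem_privateNeighbors, mem_filter, forall_mem_insert] at hb ⊢
  exact ⟨hb.1.1, hb.2.1, fun hab => absurd hab hb.1.2, hb.2.2⟩

lemma card_filter_adj_le_card_privateNeighbors_add_sum (I B : Finset V) (a : V) :
    #{b ∈ B | G.Adj a b} ≤ #(privateNeighbors G (insert a I) B a) +
      ∑ i ∈ I, #{b ∈ B | G.Adj a b ∧ G.Adj i b} := by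
  have hcover : ({b ∈ B | G.Adj a b} : Finset V) ⊆ privateNeighbors G (insert a I) B a ∪
      I.biUnion fun i => {b ∈ B | G.Adj a b ∧ G.Adj i b} := by
    intro b hb
    simp only [mem_privateNeighbors, mem_union, mem_biUnion, mem_filter, forall_mem_insert] at hb ⊢
    grind
  calc _ ≤ _ := card_le_card hcover
    _ ≤ _ := card_union_le _ _
    _ ≤ _ := by gcongr; exact card_biUnion_le

omit [DecidableEq V] in
lemma sum_card_filter_adj_eq_add (I B : Finset V) (a : V) :
    ∑ i ∈ I, #{b ∈ B | G.Adj i b} = ∑ i ∈ I, #{b ∈ {b ∈ B | ¬G.Adj a b} | G.Adj i b} +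
      ∑ i ∈ I, #{b ∈ B | G.Adj a b ∧ G.Adj i b} := by
  rw [← sum_add_distrib]
  refine sum_congr rfl fun i _ => ?_
  rw [filter_comm, ← filter_filter, filter_comm (G.Adj a), add_comm,
    card_filter_add_card_filter_not]

/-- Greedily choose vertices `a ∈ A` with at least `2D/3` not yet covered neighbours; reading the
choices backwards, put `a` into `I` unless `I` already sees more than `D/3` of the vertices which
`a` covered. The discarded choices are paid for by these repeated edges. -/
lemma exists_greedy_cover (A B : Finset V) {D : ℕ} (hD : 0 < D)
    (hdeg : ∀ a ∈ A, #{b ∈ B | G.Adj a b} ≤ D) :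
    ∃ I ⊆ A, ∃ B' ⊆ B, (∀ i ∈ I, D ≤ 3 * #(privateNeighbors G I B i)) ∧
      (∀ a ∈ A, 3 * #{b ∈ B' | G.Adj a b} < 2 * D) ∧
      #B + #I * D ≤ #B' + 3 * ∑ i ∈ I, #{b ∈ B | G.Adj i b} := by
  induction B using Finset.strongInduction with
  | H B ih =>
    by_cases! hsmall : ∀ a ∈ A, 3 * #{b ∈ B | G.Adj a b} < 2 * D
    · exact ⟨∅, empty_subset A, B, subset_rfl, by simp, hsmall, by simp⟩
    obtain ⟨a, haA, ha⟩ := hsmall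
    set B₁ : Finset V := {b ∈ B | ¬G.Adj a b}
    have hcard : #{b ∈ B | G.Adj a b} + #B₁ = #B := card_filter_add_card_filter_not _
    have hB₁B : B₁ ⊆ B := filter_subset _ B
    obtain ⟨I, hIA, B', hB', hpriv, hB'deg, hcount⟩ :=
      ih B₁ (hB₁B.ssubset_of_ne fun h => by rw [h] at hcard; omega) fun x hx =>
        (card_le_card (filter_subset_filter _ hB₁B)).trans (hdeg x hx)
    have hsum : _ = ∑ i ∈ I, #{b ∈ B₁ | G.Adj i b} + _ := sum_card_filter_adj_eq_add G I B a
    by_cases hfew : 3 * ∑ i ∈ I, #{b ∈ B | G.Adj a b ∧ G.Adj i b} ≤ D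
    · have haI : a ∉ I := by
        intro haI
        have := hpriv a haI
        rw [privateNeighbors_filter_not_adj_self, card_empty] at this
        omega
      refine ⟨insert a I, insert_subset haA hIA, B', hB'.trans hB₁B, ?_, hB'deg, ?_⟩
      · rw [forall_mem_insert]
        refine ⟨?_, fun i hi => (hpriv i hi).trans ?_⟩
        · have := card_filter_adj_le_card_privateNeighbors_add_sum G I B a
          omega
        · gcongr
          exact privateNeighbors_filter_not_adj_subset G I B a i
      · rw [sum_insert haI, card_insert_of_notMem haI, hsum, add_one_mul]
        omega
    · refine ⟨I, hIA, B', hB'.trans hB₁B, fun i hi => (hpriv i hi).trans ?_, hB'deg, ?_⟩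
      · gcongr
        exact privateNeighbors_mono G hB₁B i
      · have := hdeg a haA
        omega

variable {G} {A B : Finset V} {Γ : ℝ}

lemma exists_subset_of_few_privateNeighbors {D : ℕ} (hD : 0 < D)
    (hdeg : ∀ a ∈ A, #{b ∈ B | G.Adj a b} ≤ D)
    (hfew : ∀ I ⊆ A, I.Nonempty → ∃ i ∈ I, #(privateNeighbors G I B i) * (#I : ℝ) ^ 2 < Γ) :
    ∃ B' ⊆ B, (∀ a ∈ A, 3 * #{b ∈ B' | G.Adj a b} < 2 * D) ∧
      (#B : ℝ) ≤ #B' + √(12 * (Γ * D)) := by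
  obtain ⟨I, hIA, B', hB', hpriv, hB'deg, hcount⟩ := exists_greedy_cover G A B hD hdeg
  refine ⟨B', hB', hB'deg, ?_⟩
  have hcard : #B ≤ #B' + 2 * #I * D := by
    have := sum_le_card_nsmul I _ D fun i hi => hdeg i (hIA hi)
    rw [smul_eq_mul] at this
    linarith
  have hI : 2 * (#I : ℝ) * D ≤ √(12 * (Γ * D)) := by
    obtain rfl | hne := I.eq_empty_or_nonempty
    · simp only [card_empty, Nat.cast_zero, mul_zero, zero_mul, Real.sqrt_nonneg]
    obtain ⟨i, hi, hΓ⟩ := hfew I hIA hne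
    have hDi : (D : ℝ) ≤ 3 * #(privateNeighbors G I B i) := by exact_mod_cast hpriv i hi
    apply Real.le_sqrt_of_sq_le
    calc (2 * (#I : ℝ) * D) ^ 2 = 4 * D * (#I : ℝ) ^ 2 * D := by ring
      _ ≤ 4 * D * (#I : ℝ) ^ 2 * (3 * #(privateNeighbors G I B i)) := by gcongr
      _ = 12 * (#(privateNeighbors G I B i) * (#I : ℝ) ^ 2 * D) := by ring
      _ ≤ 12 * (Γ * D) := by gcongr
  calc (#B : ℝ) ≤ #B' + 2 * #I * D := by exact_mod_cast hcard
    _ ≤ #B' + √(12 * (Γ * D)) := by gcongr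

-- The exact solution of `K = √12 + K √(2/3)` is `K = 6(√3 + √2) ≈ 18.88`.
lemma sqrt_twelve_add_mul_sqrt_two_thirds_le : √12 + 18.9 * √(2 / 3) ≤ 18.9 := by
  have h₁ : √12 ≤ 3.4642 := by rw [Real.sqrt_le_left] <;> norm_num
  have h₂ : √(2 / 3) ≤ 0.8165 := by rw [Real.sqrt_le_left] <;> norm_num
  linarith

lemma card_le_of_few_privateNeighbors (hΓ : 0 ≤ Γ) (hcov : ∀ b ∈ B, ∃ a ∈ A, G.Adj a b) {D : ℕ}
    (hdeg : ∀ a ∈ A, #{b ∈ B | G.Adj a b} ≤ D)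
    (hfew : ∀ I ⊆ A, I.Nonempty → ∃ i ∈ I, #(privateNeighbors G I B i) * (#I : ℝ) ^ 2 < Γ) :
    (#B : ℝ) ≤ 18.9 * √(Γ * D) := by
  induction D using Nat.strong_induction_on generalizing B with
  | _ D ih =>
    obtain rfl | hD := D.eq_zero_or_pos
    · have hB : B = ∅ := eq_empty_of_forall_notMem fun b hb => by
        obtain ⟨a, ha, hab⟩ := hcov b hb
        have hempty := card_eq_zero.1 (Nat.le_zero.1 (hdeg a ha))
        exact notMem_empty b (hempty ▸ mem_filter.2 ⟨hb, hab⟩)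
      simp [hB]
    obtain ⟨B', hB', hB'deg, hcard⟩ := exists_subset_of_few_privateNeighbors hD hdeg hfew
    obtain ⟨D', hD'⟩ : ∃ D', D' = (2 * D - 1) / 3 := ⟨_, rfl⟩
    have hrec : (#B' : ℝ) ≤ 18.9 * √(Γ * D') := by
      refine ih D' (by omega) (fun b hb => hcov b (hB' hb)) ?_ fun I hI hne => ?_
      · intro a ha
        have := hB'deg a ha
        omega
      · obtain ⟨i, hi, h⟩ := hfew I hI hne
        refine ⟨i, hi, h.trans_le' ?_⟩
        gcongr
        exact privateNeighbors_mono G hB' i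
    have hD'D : (D' : ℝ) ≤ 2 / 3 * D := by
      have : (3 * D' : ℝ) ≤ 2 * D := by exact_mod_cast (by omega : 3 * D' ≤ 2 * D)
      linarith
    calc (#B : ℝ) ≤ 18.9 * √(Γ * D') + √(12 * (Γ * D)) := by linarith
      _ ≤ 18.9 * √(Γ * (2 / 3 * D)) + √(12 * (Γ * D)) := by gcongr
      _ = (√12 + 18.9 * √(2 / 3)) * √(Γ * D) := by
        rw [mul_left_comm Γ, Real.sqrt_mul (by norm_num : (0 : ℝ) ≤ 2 / 3),
          Real.sqrt_mul (by norm_num : (0 : ℝ) ≤ 12)]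
        ring
      _ ≤ 18.9 * √(Γ * D) := by
        gcongr
        exact sqrt_twelve_add_mul_sqrt_two_thirds_le

end GreedyCover

/-! ### Rich pairs -/

section RichPair

variable {V : Type*} [DecidableEq V] {G : SimpleGraph V} [DecidableRel G.Adj]
  {X Y S I : Finset V} {Γ : ℝ} {v : V}

variable (G) in
/-- A vertex `v` of `X` and a nonempty stable set `I` of neighbours of `v` in `X` form a rich pair
if every `i ∈ I` has at least `Γ / |I|²` private neighbours among the non-neighbours of `v` in `X`.
This is a comb of `G[X]` of the shape wanted in the theorem, before enumerating `I`. -/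
structure IsRichPair (X : Finset V) (Γ : ℝ) (v : V) (I : Finset V) : Prop where
  mem : v ∈ X
  subset : I ⊆ {w ∈ X | G.Adj v w}
  isIndepSet : G.IsIndepSet I
  nonempty : I.Nonempty
  le_card_mul_sq : ∀ i ∈ I,
    Γ ≤ #(privateNeighbors G I {w ∈ X | ¬G.Adj v w} i) * (#I : ℝ) ^ 2

namespace IsRichPair

lemma isComb (h : IsRichPair G X Γ v I) :
    IsComb G (Γ / (#I : ℝ) ^ 2) (fun k => (I.equivFin.symm k : V))
      fun k => privateNeighbors G I {w ∈ X | ¬G.Adj v w} (I.equivFin.symm k) := by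
  have hinj : Function.Injective fun k => (I.equivFin.symm k : V) :=
    Subtype.val_injective.comp I.equivFin.symm.injective
  have hpriv {i j : V} (hj : j ∈ I) {w : V}
      (hw : w ∈ privateNeighbors G I {w ∈ X | ¬G.Adj v w} i) : G.Adj j w → j = i :=
    (mem_privateNeighbors.1 hw).2.2 j hj
  refine ⟨hinj, fun k l hkl => disjoint_left.2 fun w hwk hwl => hkl (hinj ?_),
    fun k l hkl => ?_, fun k w hw => (mem_privateNeighbors.1 hw).2.1,
    fun k l hkl w hw hadj => hkl (hinj (hpriv (I.equivFin.symm k).2 hw hadj)), fun k => ?_⟩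
  · exact hpriv (I.equivFin.symm k).2 hwl (mem_privateNeighbors.1 hwk).2.1
  · exact (mem_filter.1 (privateNeighbors_subset G _ _ _ hkl)).2
      (mem_filter.1 (h.subset (I.equivFin.symm k).2)).2
  · have := h.nonempty.card_pos
    rw [div_le_iff₀ (by positivity)]
    exact h.le_card_mul_sq _ (I.equivFin.symm k).2

lemma le_mul_sq {Δ : ℝ} (h : IsRichPair G X Γ v I)
    (hdeg : ∀ x ∈ X, (#{w ∈ X | G.Adj x w} : ℝ) ≤ Δ) : Γ ≤ Δ * (#I : ℝ) ^ 2 := by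
  obtain ⟨i, hi⟩ := h.nonempty
  have hsub : privateNeighbors G I {w ∈ X | ¬G.Adj v w} i ⊆ {w ∈ X | G.Adj i w} := fun w hw => by
    obtain ⟨hw, hiw, -⟩ := mem_privateNeighbors.1 hw
    exact mem_filter.2 ⟨(mem_filter.1 hw).1, hiw⟩
  refine (h.le_card_mul_sq i hi).trans ?_
  gcongr
  exact (Nat.cast_le.2 (card_le_card hsub)).trans (hdeg i (mem_filter.1 (h.subset hi)).1)

end IsRichPair

variable (G) in
/-- The vertices of `Y` with no neighbour in `S`, that is, what remains of `Y` once the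
neighbourhood of `S` has been deleted. -/
def nonNeighbors (S Y : Finset V) : Finset V :=
  {w ∈ Y | ∀ s ∈ S, ¬G.Adj s w}

lemma disjoint_nonNeighbors_insert (hS : ∀ s ∈ S, G.Adj v s) :
    Disjoint S (nonNeighbors G (insert v S) Y) :=
  disjoint_left.2 fun s hs hsP => (mem_filter.1 hsP).2 v (mem_insert_self v S) (hS s hs)

lemma nonNeighbors_insert_ssubset (hv : v ∈ Y) (hne : S.Nonempty) (hS : ∀ s ∈ S, G.Adj v s) :
    nonNeighbors G (insert v S) Y ⊂ Y := by
  obtain ⟨s, hs⟩ := hne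
  exact filter_ssubset.2 ⟨v, hv, fun h => h s (mem_insert_of_mem hs) (hS s hs).symm⟩

lemma not_adj_of_mem_nonNeighbors_insert {s w : V} (hs : s ∈ S)
    (hw : w ∈ nonNeighbors G (insert v S) Y) : ¬G.Adj s w :=
  (mem_filter.1 hw).2 s (mem_insert_of_mem hs)

lemma card_le_of_forall_not_isRichPair (hrich : ∀ v I, ¬IsRichPair G X Γ v I) (hΓ : 0 ≤ Γ)
    (hYX : Y ⊆ X) (hv : v ∈ Y) (hS : S ⊆ {w ∈ Y | G.Adj v w}) (hSind : G.IsIndepSet S) {D : ℕ}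
    (hdeg : ∀ s ∈ S, #{w ∈ Y | G.Adj s w} ≤ D) :
    (#Y : ℝ) ≤ #{w ∈ Y | G.Adj v w} + 18.9 * √(Γ * D) + #(nonNeighbors G (insert v S) Y) := by
  set C : Finset V := {w ∈ Y | ¬G.Adj v w ∧ ∃ s ∈ S, G.Adj s w} with hC
  have hCsub : C ⊆ {w ∈ X | ¬G.Adj v w} := fun w hw =>
    mem_filter.2 ⟨hYX (mem_filter.1 hw).1, (mem_filter.1 hw).2.1⟩
  have hCcard : (#C : ℝ) ≤ 18.9 * √(Γ * D) := by
    refine card_le_of_few_privateNeighbors (A := S) hΓ (fun w hw => (mem_filter.1 hw).2.2)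
      (fun s hs => (card_le_card (filter_subset_filter _ (filter_subset _ Y))).trans (hdeg s hs))
      fun I hIS hne => ?_
    by_contra! hmany
    refine hrich v I ⟨hYX hv, (hIS.trans hS).trans (filter_subset_filter _ hYX),
      hSind.mono (coe_subset.2 hIS), hne, fun i hi => (hmany i hi).trans ?_⟩
    gcongr
    exact privateNeighbors_mono G hCsub i
  have hcover : Y ⊆ {w ∈ Y | G.Adj v w} ∪ C ∪ nonNeighbors G (insert v S) Y := by
    intro w hw
    simp only [hC, nonNeighbors, mem_union, mem_filter, forall_mem_insert]
    grind
  have hcard : #Y ≤ #{w ∈ Y | G.Adj v w} + #C + #(nonNeighbors G (insert v S) Y) :=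
    (card_le_card hcover).trans ((card_union_le _ _).trans (by gcongr; exact card_union_le _ _))
  calc (#Y : ℝ) ≤ #{w ∈ Y | G.Adj v w} + #C + #(nonNeighbors G (insert v S) Y) := by
        exact_mod_cast hcard
    _ ≤ _ := by gcongr

end RichPair

/-! ### Stable sets in critical graphs -/

section StableSets

lemma alphaNum_eq_indepNum {V : Type*} (G : SimpleGraph V) : alphaNum G = G.indepNum :=
  G.cliqueNum_compl

lemma isIndepSet_union {V : Type*} [DecidableEq V] {G : SimpleGraph V} {S T : Finset V}
    (hS : G.IsIndepSet S) (hT : G.IsIndepSet T) (hST : ∀ s ∈ S, ∀ t ∈ T, ¬G.Adj s t) :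
    G.IsIndepSet (S ∪ T : Finset V) := by
  rw [coe_union]
  exact Set.pairwise_union.2
    ⟨hS, hT, fun s hs t ht _ => ⟨hST s hs t ht, fun h => hST s hs t ht h.symm⟩⟩

lemma exists_isIndepSet_of_forall_exists_step {V : Type*} {G : SimpleGraph V}
    {K : ℝ} {X : Finset V}
    (hstep : ∀ Y ⊆ X, Y.Nonempty → ∃ S ⊆ Y, ∃ P ⊂ Y, G.IsIndepSet S ∧ Disjoint S P ∧
      (∀ s ∈ S, ∀ p ∈ P, ¬G.Adj s p) ∧ (#Y : ℝ) ≤ K * #S + #P) :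
    ∃ T ⊆ X, G.IsIndepSet T ∧ (#X : ℝ) ≤ K * #T := by
  classical
  induction X using Finset.strongInduction with
  | H X ih =>
    obtain rfl | hne := X.eq_empty_or_nonempty
    · exact ⟨∅, subset_rfl, by simp, by simp⟩
    obtain ⟨S, hSX, P, hPX, hS, hdisj, hSP, hcard⟩ := hstep X subset_rfl hne
    obtain ⟨T, hTP, hT, hTcard⟩ := ih P hPX fun Y hY => hstep Y (hY.trans hPX.subset)
    refine ⟨S ∪ T, union_subset hSX (hTP.trans hPX.subset),
      isIndepSet_union hS hT fun s hs t ht => hSP s hs t (hTP ht), ?_⟩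
    rw [card_union_of_disjoint (hdisj.mono_right hTP)]
    push_cast
    linarith

variable {V : Type*} {G : SimpleGraph V}

lemma cliqueNum_pos [Finite V] [Nonempty V] (G : SimpleGraph V) : 0 < G.cliqueNum := by
  obtain ⟨x⟩ := ‹Nonempty V›
  have hclique : G.IsClique ({x} : Finset V) := by simp
  exact hclique.card_le_cliqueNum

lemma two_le_cliqueNum_of_adj [Finite V] {x y : V} (h : G.Adj x y) : 2 ≤ G.cliqueNum := by
  classical
  have hclique : G.IsClique ({x, y} : Finset V) := by
    simpa only [coe_insert, coe_singleton, isClique_pair] using fun _ => h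
  simpa only [card_pair h.ne] using hclique.card_le_cliqueNum

lemma two_le_kappaNum [Finite V] [Nontrivial V] (G : SimpleGraph V) : 2 ≤ kappaNum G := by
  obtain ⟨x, y, hxy⟩ := exists_pair_ne V
  by_cases hadj : G.Adj x y
  · exact le_mul_of_one_le_of_le (cliqueNum_pos Gᶜ) (two_le_cliqueNum_of_adj hadj)
  · exact le_mul_of_le_of_one_le
      (two_le_cliqueNum_of_adj ((G.compl_adj x y).2 ⟨hxy, hadj⟩)) (cliqueNum_pos G)

variable [Fintype V] {τ q : ℝ}

lemma half_rpow_le_rpow {n m : ℝ} (hτ : 0 ≤ τ) (hq : 0 ≤ q) (hqτ : 1 / 2 ≤ q ^ τ) (hn : 0 ≤ n)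
    (hm : q * n ≤ m) : 1 / 2 * n ^ τ ≤ m ^ τ :=
  calc 1 / 2 * n ^ τ ≤ q ^ τ * n ^ τ := by gcongr
    _ = (q * n) ^ τ := (Real.mul_rpow hq hn).symm
    _ ≤ m ^ τ := by gcongr

namespace TauCritical

lemma card_pos (hG : TauCritical τ G) (hτ : 0 < τ) : 0 < Fintype.card V := by
  by_contra! h
  have := hG.1
  rw [Nat.le_zero.1 h, Nat.cast_zero, Real.zero_rpow hτ.ne'] at this
  exact this.not_ge (Nat.cast_nonneg _)

lemma two_lt_card_rpow (hG : TauCritical τ G) (hτ : 0 < τ) : 2 < (Fintype.card V : ℝ) ^ τ := by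
  have : Nonempty V := Fintype.card_pos_iff.1 (hG.card_pos hτ)
  have hκ : 1 ≤ kappaNum G := Nat.mul_pos (cliqueNum_pos Gᶜ) (cliqueNum_pos G)
  have : Nontrivial V := by
    by_contra! hV
    have hle : (Fintype.card V : ℝ) ^ τ ≤ 1 :=
      Real.rpow_le_one (by positivity) (by exact_mod_cast Fintype.card_le_one_iff_subsingleton.2 hV)
        hτ.le
    exact (hG.1.trans_le hle).not_ge (by exact_mod_cast hκ)
  exact lt_of_le_of_lt (by exact_mod_cast two_le_kappaNum G) hG.1

lemma one_le_mul_card (hG : TauCritical τ G) (hτ : 0 < τ) (hq : 0 ≤ q) (hqτ : 1 / 2 ≤ q ^ τ) :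
    1 ≤ q * Fintype.card V := by
  by_contra! hlt
  have hhalf := half_rpow_le_rpow (n := Fintype.card V) hτ.le hq hqτ (by positivity) le_rfl
  have hle : (q * Fintype.card V) ^ τ ≤ 1 := Real.rpow_le_one (by positivity) hlt.le hτ.le
  linarith [hG.two_lt_card_rpow hτ]

lemma exists_isIndepSet (hG : TauCritical τ G) {Y : Finset V} (hY : Y ≠ univ) :
    ∃ S ⊆ Y, G.IsIndepSet S ∧ (#Y : ℝ) ^ τ ≤ #S * omegaNum G := by
  obtain ⟨S, hS⟩ := (G.induce (Y : Set V)).exists_isNIndepSet_indepNum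
  refine ⟨S.map (.subtype _), fun x hx => ?_, ?_, (hG.2 Y hY).trans ?_⟩
  · obtain ⟨y, -, rfl⟩ := mem_map.1 hx
    exact y.2
  · rw [coe_map]
    exact Set.Pairwise.image hS.isIndepSet
  · rw [card_map, hS.card_eq, kappaNum, alphaNum_eq_indepNum, Nat.cast_mul]
    gcongr
    exact cliqueNum_induce_le _

lemma card_mul_omegaNum_lt (hG : TauCritical τ G) {S : Finset V} (hS : G.IsIndepSet S) :
    #S * (omegaNum G : ℝ) < (Fintype.card V : ℝ) ^ τ := by
  refine lt_of_le_of_lt ?_ hG.1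
  rw [kappaNum, alphaNum_eq_indepNum, Nat.cast_mul]
  gcongr
  exact hS.card_le_indepNum

lemma card_rpow_lt_of_anticomplete (hG : TauCritical τ G) {S P : Finset V}
    (hS : G.IsIndepSet S) (hne : S.Nonempty) (hdisj : Disjoint S P)
    (hSP : ∀ s ∈ S, ∀ p ∈ P, ¬G.Adj s p) :
    #S * (omegaNum G : ℝ) + (#P : ℝ) ^ τ < (Fintype.card V : ℝ) ^ τ := by
  classical
  have hP : P ≠ univ := by
    rintro rfl
    exact disjoint_left.1 hdisj hne.choose_spec (mem_univ _)
  obtain ⟨T, hTP, hT, hTcard⟩ := hG.exists_isIndepSet hP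
  have hunion := hG.card_mul_omegaNum_lt
    (isIndepSet_union hS hT fun s hs t ht => hSP s hs t (hTP ht))
  rw [card_union_of_disjoint (hdisj.mono_right hTP)] at hunion
  push_cast at hunion
  linarith

lemma exists_isIndepSet_neighbors [DecidableRel G.Adj] (hG : TauCritical τ G) (Y : Finset V)
    (v : V) : ∃ S ⊆ ({w ∈ Y | G.Adj v w} : Finset V), G.IsIndepSet S ∧
      (#{w ∈ Y | G.Adj v w} : ℝ) ^ τ ≤ #S * omegaNum G :=
  hG.exists_isIndepSet fun h => G.irrefl (mem_filter.1 (h ▸ mem_univ v)).2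

end TauCritical

end StableSets

/-! ### Critical graphs contain rich pairs -/

section Sparse

variable {V : Type*} [Fintype V] [DecidableEq V] {G : SimpleGraph V} [DecidableRel G.Adj]
  {X : Finset V} {τ q Γ : ℝ}

namespace TauCritical

lemma card_neighbors_le_of_forall_not_isRichPair (hG : TauCritical τ G) (hτ : 0 ≤ τ) (hq : 0 < q)
    (hqτ : 1 / 2 ≤ q ^ τ) (hrich : ∀ v I, ¬IsRichPair G X Γ v I) (hΓ : 0 ≤ Γ) {Δ : ℝ}
    (hdeg : ∀ x ∈ X, (#{w ∈ X | G.Adj x w} : ℝ) ≤ Δ)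
    (hX : q * Fintype.card V + Δ + 18.9 * √(Γ * Δ) ≤ #X) {v : V} (hv : v ∈ X) :
    (#{w ∈ X | G.Adj v w} : ℝ) ≤ q * Fintype.card V := by
  by_contra! hbig
  have hn : (0 : ℝ) < Fintype.card V := by exact_mod_cast Fintype.card_pos_iff.2 ⟨v⟩
  obtain ⟨S, hSN, hS, hScard⟩ := hG.exists_isIndepSet_neighbors X v
  have hSv : ∀ s ∈ S, G.Adj v s := fun s hs => (mem_filter.1 (hSN hs)).2
  have hShalf := (half_rpow_le_rpow hτ hq.le hqτ hn.le hbig.le).trans hScard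
  have hSne : S.Nonempty := by
    by_contra! rfl
    rw [card_empty, Nat.cast_zero, zero_mul] at hShalf
    exact hShalf.not_gt (by positivity)
  have hΔ : 0 ≤ Δ := (Nat.cast_nonneg _).trans (hdeg v hv)
  have hunseen : q * Fintype.card V ≤ #(nonNeighbors G (insert v S) X) := by
    have hcard := card_le_of_forall_not_isRichPair hrich hΓ subset_rfl hv hSN hS (D := ⌊Δ⌋₊)
      fun s hs => Nat.le_floor (hdeg s (mem_filter.1 (hSN hs)).1)
    have hsqrt : √(Γ * ⌊Δ⌋₊) ≤ √(Γ * Δ) := by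
      gcongr
      exact Nat.floor_le hΔ
    linarith [hdeg v hv]
  have hPhalf := half_rpow_le_rpow hτ hq.le hqτ hn.le hunseen
  have := hG.card_rpow_lt_of_anticomplete hS hSne (disjoint_nonNeighbors_insert (Y := X) hSv)
    fun s hs w => not_adj_of_mem_nonNeighbors_insert hs
  linarith

variable {K M : ℝ}

lemma exists_greedy_step (hG : TauCritical τ G) (hrich : ∀ v I, ¬IsRichPair G X Γ v I)
    (hΓ : 0 ≤ Γ) (hsparse : ∀ v ∈ X, (#{w ∈ X | G.Adj v w} : ℝ) ≤ M) (hM : 1 ≤ M)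
    (hcost : ∀ d : ℝ, 1 ≤ d → d ≤ M → d + 18.9 * √(Γ * d) ≤ K * d ^ τ)
    {Y : Finset V} (hYX : Y ⊆ X) (hY : Y.Nonempty) :
    ∃ S ⊆ Y, ∃ P ⊂ Y, G.IsIndepSet S ∧ Disjoint S P ∧ (∀ s ∈ S, ∀ p ∈ P, ¬G.Adj s p) ∧
      (#Y : ℝ) ≤ K * omegaNum G * #S + #P := by
  have hK : 1 ≤ K := by
    have := hcost 1 le_rfl hM
    simp only [Real.one_rpow, mul_one] at this
    linarith [Real.sqrt_nonneg Γ]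
  obtain ⟨v, hvY, hmax⟩ := Y.exists_max_image (fun a => #{w ∈ Y | G.Adj a w}) hY
  obtain hisol | hN := ({w ∈ Y | G.Adj v w} : Finset V).eq_empty_or_nonempty
  · have : Nonempty V := ⟨v⟩
    have hω : (1 : ℝ) ≤ omegaNum G := by exact_mod_cast cliqueNum_pos G
    refine ⟨{v}, singleton_subset_iff.2 hvY, Y.erase v, erase_ssubset hvY, by simp, by simp,
      fun s hs w hw => ?_, ?_⟩
    · rw [mem_singleton.1 hs]
      exact filter_eq_empty_iff.1 hisol (mem_of_mem_erase hw)
    · rw [← card_erase_add_one hvY, card_singleton]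
      push_cast
      nlinarith
  · obtain ⟨S, hSN, hS, hScard⟩ := hG.exists_isIndepSet_neighbors Y v
    have hSv : ∀ s ∈ S, G.Adj v s := fun s hs => (mem_filter.1 (hSN hs)).2
    have hd : (1 : ℝ) ≤ #{w ∈ Y | G.Adj v w} := by exact_mod_cast hN.card_pos
    have hdM : (#{w ∈ Y | G.Adj v w} : ℝ) ≤ M :=
      (Nat.cast_le.2 (card_le_card (filter_subset_filter _ hYX))).trans (hsparse v (hYX hvY))
    have hSne : S.Nonempty := by
      by_contra! rfl
      rw [card_empty, Nat.cast_zero, zero_mul] at hScard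
      exact hScard.not_gt (by positivity)
    refine ⟨S, hSN.trans (filter_subset _ Y), nonNeighbors G (insert v S) Y,
      nonNeighbors_insert_ssubset hvY hSne hSv, hS, disjoint_nonNeighbors_insert hSv,
      fun s hs w => not_adj_of_mem_nonNeighbors_insert hs, ?_⟩
    calc (#Y : ℝ) ≤ #{w ∈ Y | G.Adj v w} + 18.9 * √(Γ * #{w ∈ Y | G.Adj v w}) +
          #(nonNeighbors G (insert v S) Y) :=
        card_le_of_forall_not_isRichPair hrich hΓ hYX hvY hSN hS
          fun s hs => hmax s (mem_filter.1 (hSN hs)).1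
      _ ≤ K * #{w ∈ Y | G.Adj v w} ^ τ + #(nonNeighbors G (insert v S) Y) := by
        gcongr
        exact hcost _ hd hdM
      _ ≤ K * (#S * omegaNum G) + #(nonNeighbors G (insert v S) Y) := by gcongr
      _ = K * omegaNum G * #S + #(nonNeighbors G (insert v S) Y) := by ring

lemma exists_isRichPair_of_sparse (hG : TauCritical τ G) (hΓ : 0 ≤ Γ)
    (hsparse : ∀ v ∈ X, (#{w ∈ X | G.Adj v w} : ℝ) ≤ M) (hM : 1 ≤ M) (hK : 0 < K)
    (hcost : ∀ d : ℝ, 1 ≤ d → d ≤ M → d + 18.9 * √(Γ * d) ≤ K * d ^ τ)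
    (hX : K * (Fintype.card V : ℝ) ^ τ ≤ #X) : ∃ v I, IsRichPair G X Γ v I := by
  by_contra! hrich
  obtain ⟨T, -, hT, hTcard⟩ := exists_isIndepSet_of_forall_exists_step fun Y hYX hY =>
    hG.exists_greedy_step hrich hΓ hsparse hM hcost hYX hY
  have hlt : K * (#T * omegaNum G) < K * (Fintype.card V : ℝ) ^ τ := by
    gcongr
    exact hG.card_mul_omegaNum_lt hT
  linarith

end TauCritical

end Sparse

/-! ### Choice of the exponent -/

section Exponent

lemma add_mul_sqrt_le_mul_rpow {c δ τ x : ℝ} (hc : 0 ≤ c) (hδ : 0 ≤ δ) (hτ : τ ≤ 1 / 4)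
    (hx₀ : 0 < x) (hx₁ : x ≤ 1) (hxδ : x ≤ (δ / (1 + c)) ^ 4) : x + c * √x ≤ δ * x ^ τ := by
  have hroot : √√x = x ^ (1 / 4 : ℝ) := by
    rw [Real.sqrt_eq_rpow, Real.sqrt_eq_rpow, ← Real.rpow_mul hx₀.le]
    norm_num
  have hrootδ : √√x ≤ δ / (1 + c) := by
    refine Real.sqrt_le_iff.2 ⟨by positivity, Real.sqrt_le_iff.2 ⟨by positivity, ?_⟩⟩
    rwa [← pow_mul]
  calc x + c * √x ≤ √x + c * √x := by
        gcongr
        exact Real.le_sqrt_of_sq_le (pow_le_of_le_one hx₀.le hx₁ two_ne_zero)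
    _ = (1 + c) * √√x * √√x := by
        rw [mul_assoc, Real.mul_self_sqrt (Real.sqrt_nonneg x)]
        ring
    _ ≤ (1 + c) * (δ / (1 + c)) * x ^ τ := by
        gcongr
        rw [hroot]
        exact Real.rpow_le_rpow_of_exponent_ge hx₀ hx₁ hτ
    _ = δ * x ^ τ := by
        rw [mul_div_cancel₀]
        positivity

lemma exists_exponent {c δ : ℝ} (hc : 0 ≤ c) (hδ : 0 < δ) :
    ∃ τ : ℝ, 0 < τ ∧ ∃ q : ℝ, 0 < q ∧ q ≤ δ / 200 ∧ 1 / 2 ≤ q ^ τ ∧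
      ∀ x, 0 < x → x ≤ q → x + c * √x ≤ δ * x ^ τ := by
  obtain ⟨q, hq, hq₁, hqδ, hqc⟩ :
      ∃ q : ℝ, 0 < q ∧ q ≤ 1 ∧ q ≤ δ / 200 ∧ q ≤ (δ / (1 + c)) ^ 4 :=
    ⟨min 1 (min (δ / 200) ((δ / (1 + c)) ^ 4)), by positivity, by simp⟩
  have hlim : Filter.Tendsto (fun τ : ℝ => q ^ τ) (nhdsWithin 0 (Set.Ioi 0)) (nhds 1) := by
    simpa only [Real.rpow_zero] using
      (Real.continuousAt_const_rpow (b := 0) hq.ne').tendsto.mono_left nhdsWithin_le_nhds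
  have hsmall : ∀ᶠ τ : ℝ in nhdsWithin 0 (Set.Ioi 0), τ ∈ Set.Ioo (0 : ℝ) (1 / 4) :=
    Ioo_mem_nhdsGT (by norm_num)
  obtain ⟨τ, hτq, hτ⟩ :=
    ((hlim.eventually_const_le (by norm_num : (1 / 2 : ℝ) < 1)).and hsmall).exists
  exact ⟨τ, hτ.1, q, hq, hqδ, hτq, fun x hx₀ hxq =>
    add_mul_sqrt_le_mul_rpow hc hδ.le hτ.2.le hx₀ (hxq.trans hq₁) (hxq.trans hqc)⟩

/-- The estimate of `exists_exponent` at `x = d / n`, multiplied by `n`. -/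
lemma add_mul_sqrt_le_mul_rpow_of_scaled {c γ δ τ q n d : ℝ} (hγ : 0 ≤ γ) (hn : 0 < n)
    (hcost : ∀ x, 0 < x → x ≤ q → x + c * √γ * √x ≤ δ * x ^ τ) (hd : 0 < d) (hdq : d ≤ q * n) :
    d + c * √(γ * n * d) ≤ δ * n / n ^ τ * d ^ τ := by
  have hsqrt : √(γ * n * d) = √γ * √(d / n) * n := by
    rw [← Real.sqrt_mul hγ, show γ * n * d = γ * (d / n) * n ^ 2 by field_simp,
      Real.sqrt_mul (by positivity), Real.sqrt_sq hn.le]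
  calc d + c * √(γ * n * d) = (d / n + c * √γ * √(d / n)) * n := by
        rw [hsqrt]
        field_simp
    _ ≤ δ * (d / n) ^ τ * n := by
        gcongr
        exact hcost _ (by positivity) ((div_le_iff₀ hn).2 hdq)
    _ = δ * n / n ^ τ * d ^ τ := by
        rw [Real.div_rpow hd.le hn.le]
        ring

end Exponent

lemma one_div_le_of_le_mul_sq {δ ε n t : ℝ} (hδ : 0 < δ) (hε : 0 < ε) (hn : 0 < n) (ht : 0 ≤ t)
    (h : δ / (400 * ε) * n ≤ ε * δ * n * t ^ 2) : 1 / (20 * ε) ≤ t := by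
  refine (sq_le_sq₀ (by positivity) ht).1 (le_of_mul_le_mul_left ?_ (by positivity : 0 < ε * δ * n))
  calc ε * δ * n * (1 / (20 * ε)) ^ 2 = δ / (400 * ε) * n := by
        field_simp
        norm_num
    _ ≤ ε * δ * n * t ^ 2 := h

lemma TauCritical.exists_isRichPair {V : Type*} [Fintype V] [DecidableEq V] {G : SimpleGraph V}
    [DecidableRel G.Adj] {X : Finset V} {δ ε τ q : ℝ} (hG : TauCritical τ G) (hδ : 0 < δ)
    (hε : 0 < ε) (hε20 : ε ≤ 1 / 20) (hτ : 0 < τ) (hq : 0 < q) (hqδ : q ≤ δ / 200)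
    (hqτ : 1 / 2 ≤ q ^ τ)
    (hcost : ∀ x, 0 < x → x ≤ q → x + 18.9 * √(δ / (400 * ε)) * √x ≤ δ * x ^ τ)
    (hX : δ * Fintype.card V ≤ #X)
    (hdeg : ∀ x ∈ X, (#{w ∈ X | G.Adj x w} : ℝ) ≤ ε * δ * Fintype.card V) :
    ∃ v I, IsRichPair G X (δ / (400 * ε) * Fintype.card V) v I := by
  have hn : (0 : ℝ) < Fintype.card V := by exact_mod_cast hG.card_pos hτ
  by_contra! hrich
  have hsqrt : √(δ / (400 * ε) * Fintype.card V * (ε * δ * Fintype.card V)) =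
      δ * Fintype.card V / 20 := by
    rw [Real.sqrt_eq_iff_mul_self_eq (by positivity) (by positivity)]
    field_simp
    norm_num
  have hsparse : ∀ v ∈ X, (#{w ∈ X | G.Adj v w} : ℝ) ≤ q * Fintype.card V := fun v hv => by
    refine hG.card_neighbors_le_of_forall_not_isRichPair hτ.le hq hqτ hrich (by positivity) hdeg
      (hX.trans' ?_) hv
    calc q * Fintype.card V + ε * δ * Fintype.card V + 18.9 * _
        ≤ δ / 200 * Fintype.card V + 1 / 20 * δ * Fintype.card V +
          18.9 * (δ * Fintype.card V / 20) := by rw [hsqrt]; gcongr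
      _ = δ * Fintype.card V := by ring
  obtain ⟨v, I, h⟩ := hG.exists_isRichPair_of_sparse (K := δ * Fintype.card V / Fintype.card V ^ τ)
    (by positivity) hsparse (hG.one_le_mul_card hτ hq.le hqτ) (by positivity)
    (fun d hd => add_mul_sqrt_le_mul_rpow_of_scaled (by positivity) hn hcost (by linarith))
    (by rwa [div_mul_cancel₀ _ (by positivity)])
  exact hrich v I h

theorem stmt_7_general (δ ε : ℝ) (hδ : 0 < δ) (hε : 0 < ε) (hε20 : ε ≤ 1 / 20) :
    ∃ τ : ℝ, 0 < τ ∧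
      ∀ (V : Type*) [Fintype V] [DecidableEq V] (G : SimpleGraph V) [DecidableRel G.Adj]
        (X : Finset V),
        TauCritical τ G →
        δ * (Fintype.card V : ℝ) ≤ (X.card : ℝ) →
        (∀ v ∈ X, ((X.filter (G.Adj v)).card : ℝ) ≤ ε * δ * (Fintype.card V : ℝ)) →
        ∃ t : ℕ, 1 / (20 * ε) ≤ (t : ℝ) ∧
          ∃ a : Fin t → V, ∃ Bs : Fin t → Finset V,
            IsComb G (δ * (Fintype.card V : ℝ) / (400 * ε * (t : ℝ) ^ 2)) a Bs ∧
            (∀ i, a i ∈ X) ∧ (∀ i, Bs i ⊆ X) ∧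
            (∀ i j, i ≠ j → ¬ G.Adj (a i) (a j)) ∧
            ∃ v ∈ X, (∀ i, G.Adj v (a i)) ∧ (∀ i, ∀ w ∈ Bs i, ¬ G.Adj v w) := by
  obtain ⟨τ, hτ, q, hq, hqδ, hqτ, hcost⟩ :=
    exists_exponent (c := 18.9 * √(δ / (400 * ε))) (by positivity) hδ
  refine ⟨τ, hτ, fun V _ _ G _ X hG hX hdeg => ?_⟩
  obtain ⟨v, I, h⟩ := hG.exists_isRichPair hδ hε hε20 hτ hq hqδ hqτ hcost hX hdeg
  have hN (k : Fin #I) := mem_filter.1 (h.subset (I.equivFin.symm k).2)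
  have hB (k : Fin #I) (w) (hw : w ∈ privateNeighbors G I {w ∈ X | ¬G.Adj v w} _) :=
    mem_filter.1 (privateNeighbors_subset G I _ (I.equivFin.symm k) hw)
  have hcomb := h.isComb
  rw [div_mul_eq_mul_div, div_div] at hcomb
  exact ⟨#I, one_div_le_of_le_mul_sq hδ hε (by exact_mod_cast hG.card_pos hτ) (by positivity)
    (h.le_mul_sq hdeg), _, _, hcomb, fun k => (hN k).1, fun k w hw => (hB k w hw).1,
    fun k l hkl => h.isIndepSet (I.equivFin.symm k).2 (I.equivFin.symm l).2 (hcomb.1.ne hkl),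
    v, h.mem, fun k => (hN k).2, fun k w hw => (hB k w hw).2⟩

/-- The key lemma: for all `δ, ε > 0` with `ε < 1/20` there exists `τ > 0` such that for
every `τ`-critical graph `G` and `X ⊆ V(G)` with `|X| ≥ δ|G|` inducing a subgraph of
maximum degree at most `εδ|G|`, there is a `(t, δ|G|/(400 ε t²))`-comb of `G[X]` with
`t ≥ 1/(400ε)`, with `{a_1, …, a_t}` stable, and a vertex `v ∈ X` adjacent to all the `a_i`
and with no neighbour in `B_1 ∪ ⋯ ∪ B_t`. -/
theorem stmt_7 (δ ε : ℝ) (hδ : 0 < δ) (hε : 0 < ε) (hε20 : ε < 1 / 20) :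
    ∃ τ : ℝ, 0 < τ ∧
      ∀ (V : Type) [Fintype V] [DecidableEq V] (G : SimpleGraph V) [DecidableRel G.Adj]
        (X : Finset V),
        TauCritical τ G →
        δ * (Fintype.card V : ℝ) ≤ (X.card : ℝ) →
        (∀ v ∈ X, ((X.filter (G.Adj v)).card : ℝ) ≤ ε * δ * (Fintype.card V : ℝ)) →
        ∃ t : ℕ, 1 / (400 * ε) ≤ (t : ℝ) ∧
          ∃ a : Fin t → V, ∃ Bs : Fin t → Finset V,
            IsComb G (δ * (Fintype.card V : ℝ) / (400 * ε * (t : ℝ) ^ 2)) a Bs ∧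
            (∀ i, a i ∈ X) ∧ (∀ i, Bs i ⊆ X) ∧
            (∀ i j, i ≠ j → ¬ G.Adj (a i) (a j)) ∧
            ∃ v ∈ X, (∀ i, G.Adj v (a i)) ∧ (∀ i, ∀ w ∈ Bs i, ¬ G.Adj v w) := by
  obtain ⟨τ, hτ, h⟩ := stmt_7_general δ ε hδ hε hε20.le
  refine ⟨τ, hτ, fun V _ _ G _ X hG hX hdeg => ?_⟩
  obtain ⟨t, ht, hcomb⟩ := h V G X hG hX hdeg
  exact ⟨t, ht.trans' (by gcongr; norm_num), hcomb⟩
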